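/- arXiv:1604.06997 — 4 statements merged into one kernel-verified Lean document; each statement's English description precedes it below -/
import Mathlib

section
/- The number of points added by GREEDY is at most twice the number of distinct pairs: |G| ≤ 2 · |{CP(p) : p ∈ G}|. -/
open Finset

attribute [local instance] Classical.propDecidable

/-- A point in the plane: first coordinate is the key, second is the time. -/
abbrev Pt : Type := ℤ × ℤ

/-- `r` lies in the closed axis-parallel rectangle with opposite corners `p` and `q`. -/
def inRect (p q r : Pt) : Prop :=
  min p.1 q.1 ≤ r.1 ∧ r.1 ≤ max p.1 q.1 ∧ min p.2 q.2 ≤ r.2 ∧ r.2 ≤ max p.2 q.2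

/-- `r` lies in the open axis-parallel rectangle with opposite corners `p` and `q`. -/
def inOpenRect (p q r : Pt) : Prop :=
  min p.1 q.1 < r.1 ∧ r.1 < max p.1 q.1 ∧ min p.2 q.2 < r.2 ∧ r.2 < max p.2 q.2

/-- `S` is an arborally satisfied set. -/
def ArbSat (S : Finset Pt) : Prop :=
  ∀ p ∈ S, ∀ q ∈ S, p.1 = q.1 ∨ p.2 = q.2 ∨ ∃ r ∈ S, r ≠ p ∧ r ≠ q ∧ inRect p q r

/-- `X` is the permutation point set `{(σ(t), t) : 1 ≤ t ≤ n}` of some permutation `σ` of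
`{1, …, n}`. -/
def IsPermPointSet (n : ℕ) (X : Finset Pt) : Prop :=
  ∃ σ : Equiv.Perm (Fin n),
    X = Finset.univ.image (fun t : Fin n => ((((σ t : ℕ) : ℤ) + 1, ((t : ℕ) : ℤ) + 1) : Pt))

/-- The points added by GREEDY at time `t`, given the point set `X` and the set `G` of points
added before time `t`: for the point `p` of `X` with time `t` and each point `q` of time `< t`
with a different key such that the rectangle spanned by `p` and `q` contains no other point of
time `< t`, the point `(key q, t)` is added. -/
noncomputable def greedyStep (X G : Finset Pt) (t : ℤ) : Finset Pt :=
  (X.filter (fun p => p.2 = t)).biUnion (fun p =>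
    (((X ∪ G).filter (fun s => s.2 < t)).filter (fun q =>
      q.1 ≠ p.1 ∧ ∀ r ∈ (X ∪ G).filter (fun s => s.2 < t), inRect p q r → r = q)).image
      (fun q => ((q.1, t) : Pt)))

/-- All points added by GREEDY while processing times `1, …, t`. -/
noncomputable def greedyUpTo (X : Finset Pt) : ℕ → Finset Pt
  | 0 => ∅
  | t + 1 => greedyUpTo X t ∪ greedyStep X (greedyUpTo X t) ((t : ℤ) + 1)

/-- The set `G` of points added by GREEDY over the whole execution on a permutation point set
`X` of size `n`. -/
noncomputable def greedyG (n : ℕ) (X : Finset Pt) : Finset Pt := greedyUpTo X n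

/-- `OP r` is the point of `X` processed at the time at which `r` was added; for `r ∈ X`,
`OP r = r`. -/
noncomputable def OP (X : Finset Pt) (r : Pt) : Pt :=
  ((X.filter (fun p => p.2 = r.2)).toList).headI

/-- The first point of `S` above `p`: the point of `S` with the same key as `p`, smaller time,
and the largest such time. -/
noncomputable def firstAbove (S : Finset Pt) (p : Pt) : Pt :=
  (p.1, (((S.filter (fun q => q.1 = p.1 ∧ q.2 < p.2)).image Prod.snd).max).unbotD 0)

/-- The pair `CP(p) = (OP(p), OP(q))` where `q` is the first point of `X ∪ G` above `p`. -/
noncomputable def CP (X G : Finset Pt) (p : Pt) : Pt × Pt :=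
  (OP X p, OP X (firstAbove (X ∪ G) p))

/-- `CP(p) ∈ MMC` (*zig*). -/
def inMMC (X G : Finset Pt) (p : Pt) : Prop :=
  ((CP X G p).1.1 < p.1 ∧ (CP X G p).2.1 < (CP X G p).1.1 ∧ (CP X G p).2.2 < (CP X G p).1.2)
  ∨ (p.1 < (CP X G p).1.1 ∧ (CP X G p).1.1 < (CP X G p).2.1 ∧ (CP X G p).2.2 < (CP X G p).1.2)

/-- `CP(p) ∈ MFC` (*zag*). -/
def inMFC (X G : Finset Pt) (p : Pt) : Prop :=
  ((CP X G p).1.1 < p.1 ∧ p.1 ≤ (CP X G p).2.1 ∧ (CP X G p).2.2 < p.2)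
  ∨ (p.1 < (CP X G p).1.1 ∧ (CP X G p).2.1 ≤ p.1 ∧ (CP X G p).2.2 < p.2)

/-- A pair is good if no point of `X` lies in the open rectangle spanned by it. -/
def IsGoodPair (X : Finset Pt) (pr : Pt × Pt) : Prop :=
  ∀ r ∈ X, ¬ inOpenRect pr.1 pr.2 r

/-- `B` is a block of `X`: the set of points of `X` whose times lie in some interval, whose
keys form a set of consecutive integers; blocks are nonempty. -/
def IsBlock (X B : Finset Pt) : Prop :=
  B.Nonempty ∧ (∃ i j : ℤ, B = X.filter (fun p => i ≤ p.2 ∧ p.2 ≤ j)) ∧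
    ∃ c d : ℤ, B.image Prod.fst = Finset.Icc c d

/-- `Top(B)`: the point of `B` with the smallest time. -/
noncomputable def TopPt (B : Finset Pt) : Pt :=
  ((B.filter (fun p => ∀ q ∈ B, p.2 ≤ q.2)).toList).headI

/-- A decomposition tree of `X`: a rooted tree whose nodes are blocks of `X`, whose root is
`X`, whose leaves are exactly the singleton blocks, and in which the children of every
internal node partition it. -/
structure DecompTree (X : Finset Pt) where
  nodes : Finset (Finset Pt)
  parent : Finset Pt → Finset Pt
  isBlock_nodes : ∀ B ∈ nodes, IsBlock X B
  root_mem : X ∈ nodes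
  parent_mem : ∀ B ∈ nodes, B ≠ X → parent B ∈ nodes
  ssubset_parent : ∀ B ∈ nodes, B ≠ X → B ⊂ parent B
  leaf_iff : ∀ B ∈ nodes, (¬ ∃ C ∈ nodes, C ≠ X ∧ parent C = B) ↔ B.card = 1
  children_partition : ∀ B ∈ nodes, B.card ≠ 1 →
    ∀ x ∈ B, ∃! C, C ∈ nodes ∧ C ≠ X ∧ parent C = B ∧ x ∈ C

/-- The children of a node `B` in a decomposition tree. -/
noncomputable def DecompTree.children {X : Finset Pt} (T : DecompTree X) (B : Finset Pt) :
    Finset (Finset Pt) :=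
  T.nodes.filter (fun C => C ≠ X ∧ T.parent C = B)

/-- `X` is `k`-decomposable: it admits a decomposition tree in which every node has at most
`k` children. -/
def kDecomposable (k : ℕ) (X : Finset Pt) : Prop :=
  ∃ T : DecompTree X, ∀ B ∈ T.nodes, (T.children B).card ≤ k

/-- `RT(p)`: the node of the decomposition tree closest to the root (i.e. containing all
others) among the nodes `B` with `Top(B) = p`. -/
noncomputable def RT {X : Finset Pt} (T : DecompTree X) (p : Pt) : Finset Pt :=
  (((T.nodes.filter (fun B => TopPt B = p)).filter
      (fun B => ∀ C ∈ T.nodes, TopPt C = p → C ⊆ B)).toList).headI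

/-- The points added by GREEDY (`G`) while processing `Top(B)` that lie to the left of
`Top(B)`. -/
noncomputable def leftSet (G B : Finset Pt) : Finset Pt :=
  G.filter (fun s => s.2 = (TopPt B).2 ∧ s.1 < (TopPt B).1)

/-- `Left(B)`: among the points added by GREEDY while processing `Top(B)` with key less than
`key (Top B)`, the one with the largest key (junk if none exists). -/
noncomputable def leftPt (G B : Finset Pt) : Pt :=
  (((leftSet G B).filter (fun s => ∀ r ∈ leftSet G B, r.1 ≤ s.1)).toList).headI

/-- The points added by GREEDY (`G`) while processing `Top(B)` that lie to the right of
`Top(B)`. -/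
noncomputable def rightSet (G B : Finset Pt) : Finset Pt :=
  G.filter (fun s => s.2 = (TopPt B).2 ∧ (TopPt B).1 < s.1)

/-- `Right(B)`: among the points added by GREEDY while processing `Top(B)` with key greater
than `key (Top B)`, the one with the smallest key (junk if none exists). -/
noncomputable def rightPt (G B : Finset Pt) : Pt :=
  (((rightSet G B).filter (fun s => ∀ r ∈ rightSet G B, s.1 ≤ r.1)).toList).headI

/-- Every point added by GREEDY has a witness: a point above it whose rectangle with the point
of `X` processed at that time is empty. -/
theorem exists_witness_of_mem_greedyUpTo (X : Finset Pt) (m : ℕ) :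
    ∀ p ∈ greedyUpTo X m, p.2 ≤ m ∧ ∃ a ∈ X, a.2 = p.2 ∧ ∃ r ∈ X ∪ greedyUpTo X m,
      r.2 < p.2 ∧ r.1 = p.1 ∧ r.1 ≠ a.1 ∧
      ∀ s ∈ X ∪ greedyUpTo X m, s.2 < p.2 → inRect a r s → s = r := by
  induction m with
  | zero => simp [greedyUpTo]
  | succ m ih =>
    have hstep : ∀ s ∈ greedyStep X (greedyUpTo X m) ((m : ℤ) + 1), s.2 = (m : ℤ) + 1 := by
      intro s hs
      simp only [greedyStep, mem_biUnion, mem_image] at hs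
      obtain ⟨_, _, _, _, rfl⟩ := hs
      rfl
    have hold : ∀ s ∈ X ∪ greedyUpTo X (m + 1), s.2 < (m : ℤ) + 1 → s ∈ X ∪ greedyUpTo X m := by
      intro s hs hlt
      simp only [greedyUpTo, mem_union] at hs ⊢
      rcases hs with h | h | h
      · exact Or.inl h
      · exact Or.inr h
      · have := hstep s h
        omega
    have hmono : ∀ s ∈ X ∪ greedyUpTo X m, s ∈ X ∪ greedyUpTo X (m + 1) := by
      intro s hs
      simp only [greedyUpTo, mem_union] at hs ⊢
      tauto
    intro p hp
    rw [greedyUpTo, mem_union] at hp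
    rcases hp with hp | hp
    · obtain ⟨hle, a, ha, hat, r, hr, hrt, hrk, hra, hemp⟩ := ih p hp
      refine ⟨by push_cast; omega, a, ha, hat, r, hmono r hr, hrt, hrk, hra, ?_⟩
      intro s hs hst
      exact hemp s (hold s hs (by omega)) hst
    · have hpt := hstep p hp
      simp only [greedyStep, mem_biUnion, mem_image, mem_filter] at hp
      obtain ⟨a, ⟨ha, hat⟩, r, ⟨⟨hr, hrt⟩, hra, hemp⟩, rfl⟩ := hp
      refine ⟨by push_cast; exact le_rfl, a, ha, hat, r, hmono r hr, hrt, rfl, hra, ?_⟩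
      intro s hs hst
      exact hemp s ⟨hold s hs hst, hst⟩

theorem IsPermPointSet.eq_of_time_eq {n : ℕ} {X : Finset Pt} (hX : IsPermPointSet n X) {a b : Pt}
    (ha : a ∈ X) (hb : b ∈ X) (h : a.2 = b.2) : a = b := by
  obtain ⟨σ, rfl⟩ := hX
  simp only [mem_image, mem_univ, true_and] at ha hb
  obtain ⟨s, rfl⟩ := ha
  obtain ⟨t, rfl⟩ := hb
  obtain rfl : s = t := Fin.ext (by simpa using h)
  rfl

theorem OP_mem_and_time {X : Finset Pt} {a r : Pt} (ha : a ∈ X) (h : a.2 = r.2) :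
    OP X r ∈ X ∧ (OP X r).2 = r.2 := by
  have hne : (X.filter (fun p => p.2 = r.2)).toList ≠ [] := by
    rw [Ne, Finset.toList_eq_nil, ← Ne, ← Finset.nonempty_iff_ne_empty]
    exact ⟨a, by simp [ha, h]⟩
  have hmem : OP X r ∈ (X.filter (fun p => p.2 = r.2)).toList := by
    unfold OP
    obtain ⟨b, l, hl⟩ := List.exists_cons_of_ne_nil hne
    simp [hl]
  simpa using hmem

/-- If some point of `S` lies above `p`, then `firstAbove S p` is the latest such point. -/
theorem firstAbove_spec {S : Finset Pt} {p r : Pt} (hr : r ∈ S) (hk : r.1 = p.1)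
    (ht : r.2 < p.2) :
    firstAbove S p ∈ S ∧ (firstAbove S p).2 < p.2 ∧ r.2 ≤ (firstAbove S p).2 := by
  have hrT : r.2 ∈ (S.filter (fun q => q.1 = p.1 ∧ q.2 < p.2)).image Prod.snd :=
    mem_image_of_mem _ (by simp [hr, hk, ht])
  obtain ⟨m, hm⟩ := Finset.max_of_mem hrT
  have hfa : firstAbove S p = (p.1, m) := by simp [firstAbove, hm]
  have hmT := Finset.mem_of_max hm
  simp only [mem_image, mem_filter] at hmT
  obtain ⟨q, ⟨hq, hqk, hqt⟩, rfl⟩ := hmT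
  rw [hfa, ← hqk]
  exact ⟨hq, hqt, Finset.le_max_of_eq hrT hm⟩

/-- Two points added by GREEDY with the same pair coincide if the key of the first lies between
the key of the processed point and the key of the second. -/
theorem eq_of_CP_eq_of_key_between {n : ℕ} {X : Finset Pt} (hX : IsPermPointSet n X) {p p' : Pt}
    (hp : p ∈ greedyG n X) (hp' : p' ∈ greedyG n X)
    (h : CP X (greedyG n X) p = CP X (greedyG n X) p')
    (hlo : min (OP X p).1 p'.1 ≤ p.1) (hhi : p.1 ≤ max (OP X p).1 p'.1) : p = p' := by
  have htime : ∀ q ∈ X ∪ greedyG n X, (OP X q).2 = q.2 := by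
    intro q hq
    rcases mem_union.1 hq with hq | hq
    · exact (OP_mem_and_time hq rfl).2
    · obtain ⟨_, a, ha, hat, _⟩ := exists_witness_of_mem_greedyUpTo X n q hq
      exact (OP_mem_and_time ha hat).2
  obtain ⟨_, a, ha, hat, r, hr, hrt, hrk, _, _⟩ := exists_witness_of_mem_greedyUpTo X n p hp
  obtain ⟨_, a', ha', hat', r', hr', hrt', hrk', _, hemp'⟩ :=
    exists_witness_of_mem_greedyUpTo X n p' hp'
  obtain ⟨hf, hft, _⟩ := firstAbove_spec (S := X ∪ greedyG n X) hr hrk hrt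
  obtain ⟨hf', _, hfr'⟩ := firstAbove_spec (S := X ∪ greedyG n X) hr' hrk' hrt'
  obtain ⟨hOP, hOPf⟩ := Prod.mk.inj h
  have hpt : p.2 = p'.2 := by
    rw [← htime p (mem_union_right _ hp), ← htime p' (mem_union_right _ hp'), hOP]
  have hft' : (firstAbove (X ∪ greedyG n X) p).2 = (firstAbove (X ∪ greedyG n X) p').2 := by
    rw [← htime _ hf, ← htime _ hf', hOPf]
  obtain ⟨hOm, hOt⟩ := OP_mem_and_time ha hat
  have haO : a' = OP X p := hX.eq_of_time_eq ha' hOm (by omega)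
  have hrect : inRect a' r' (firstAbove (X ∪ greedyG n X) p) := by
    have hkey : (firstAbove (X ∪ greedyG n X) p).1 = p.1 := rfl
    unfold inRect
    rw [hkey, hrk', haO]
    refine ⟨hlo, hhi, ?_, ?_⟩ <;> omega
  have hfeq := hemp' _ hf (by omega) hrect
  have hkey : p.1 = p'.1 := (congrArg Prod.fst hfeq).trans hrk'
  exact Prod.ext hkey hpt

theorem key_ne_key_OP {n : ℕ} {X : Finset Pt} (hX : IsPermPointSet n X) {p : Pt}
    (hp : p ∈ greedyG n X) : p.1 ≠ (OP X p).1 := by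
  obtain ⟨_, a, ha, hat, r, _, _, hrk, hra, _⟩ := exists_witness_of_mem_greedyUpTo X n p hp
  obtain ⟨hOm, hOt⟩ := OP_mem_and_time ha hat
  rw [← hX.eq_of_time_eq ha hOm (by omega), ← hrk]
  exact hra

/-- `|G| ≤ 2 · |{CP(p) : p ∈ G}|`. -/
theorem card_G_le_two_mul_pairs (n : ℕ) (X : Finset Pt) (hX : IsPermPointSet n X) :
    (greedyG n X).card ≤ 2 * ((greedyG n X).image (CP X (greedyG n X))).card := by
  refine Finset.card_le_mul_card_image _ 2 fun c _ => ?_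
  rw [← Fintype.card_bool, ← Finset.card_univ]
  refine Finset.card_le_card_of_injOn (fun p => decide (c.1.1 < p.1)) (fun _ _ => mem_univ _) ?_
  intro p hp p' hp' hside
  simp only [coe_filter, Set.mem_ofPred_eq] at hp hp'
  obtain ⟨hp, rfl⟩ := hp
  obtain ⟨hp', hc⟩ := hp'
  have hne := key_ne_key_OP hX hp
  have hne' := key_ne_key_OP hX hp'
  have hOP : OP X p' = OP X p := congrArg Prod.fst hc
  have hside' : (OP X p).1 < p.1 ↔ (OP X p).1 < p'.1 := decide_eq_decide.1 hside
  rw [hOP] at hne'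
  by_cases hbetween : min (OP X p).1 p'.1 ≤ p.1 ∧ p.1 ≤ max (OP X p).1 p'.1
  · exact eq_of_CP_eq_of_key_between hX hp hp' hc.symm hbetween.1 hbetween.2
  · refine (eq_of_CP_eq_of_key_between hX hp' hp hc ?_ ?_).symm <;> rw [hOP] <;> omega
end

section
/- Let B be a block of X, let p₁ ∈ G, and let CP(p₁) = (p, q). If p ∈ B and p ≠ Top(B), then q ∈ B. -/
open Finset

attribute [local instance] Classical.propDecidable

theorem IsPermPointSet.time_inj {n : ℕ} {X : Finset Pt} (hX : IsPermPointSet n X) {x y : Pt}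
    (hx : x ∈ X) (hy : y ∈ X) (h : x.2 = y.2) : x = y := by
  obtain ⟨σ, rfl⟩ := hX
  simp only [mem_image, mem_univ, true_and] at hx hy
  obtain ⟨a, rfl⟩ := hx
  obtain ⟨b, rfl⟩ := hy
  have : a = b := Fin.ext (by simpa using h)
  rw [this]

theorem IsPermPointSet.key_inj {n : ℕ} {X : Finset Pt} (hX : IsPermPointSet n X) {x y : Pt}
    (hx : x ∈ X) (hy : y ∈ X) (h : x.1 = y.1) : x = y := by
  obtain ⟨σ, rfl⟩ := hX
  simp only [mem_image, mem_univ, true_and] at hx hy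
  obtain ⟨a, rfl⟩ := hx
  obtain ⟨b, rfl⟩ := hy
  have : σ a = σ b := Fin.ext (by simpa using h)
  rw [σ.injective this]

theorem IsPermPointSet.time_bounds {n : ℕ} {X : Finset Pt} (hX : IsPermPointSet n X) {x : Pt}
    (hx : x ∈ X) : 1 ≤ x.2 ∧ x.2 ≤ n := by
  obtain ⟨σ, rfl⟩ := hX
  simp only [mem_image, mem_univ, true_and] at hx
  obtain ⟨a, rfl⟩ := hx
  constructor <;> simp

theorem mem_greedyStep {X G : Finset Pt} {t : ℤ} {r : Pt} :
    r ∈ greedyStep X G t ↔ r.2 = t ∧ ∃ p ∈ X, p.2 = t ∧ ∃ q ∈ X ∪ G, q.2 < t ∧ q.1 = r.1 ∧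
      q.1 ≠ p.1 ∧ ∀ s ∈ X ∪ G, s.2 < t → inRect p q s → s = q := by
  simp only [greedyStep, mem_biUnion, mem_image, mem_filter]
  constructor
  · rintro ⟨p, ⟨hp, hpt⟩, q, ⟨⟨hq, hqt⟩, hne, hvis⟩, rfl⟩
    exact ⟨rfl, p, hp, hpt, q, hq, hqt, rfl, hne, fun s hs hst => hvis s ⟨hs, hst⟩⟩
  · rintro ⟨hr, p, hp, hpt, q, hq, hqt, hqr, hne, hvis⟩
    exact ⟨p, ⟨hp, hpt⟩, q, ⟨⟨hq, hqt⟩, hne, fun s hs => hvis s hs.1 hs.2⟩,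
      Prod.ext hqr hr.symm⟩

theorem time_le_of_mem_greedyUpTo {X : Finset Pt} {m : ℕ} {r : Pt}
    (hr : r ∈ greedyUpTo X m) : r.2 ≤ m := by
  induction m with
  | zero => simp [greedyUpTo] at hr
  | succ m ih =>
    rcases mem_union.1 hr with h | h
    · have := ih h
      push_cast
      omega
    · have := (mem_greedyStep.1 h).1
      push_cast
      omega

theorem mem_greedyUpTo_iff_of_le {X : Finset Pt} {m n : ℕ} (hmn : m ≤ n) {r : Pt} :
    r ∈ greedyUpTo X m ↔ r ∈ greedyUpTo X n ∧ r.2 ≤ m := by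
  induction n, hmn using Nat.le_induction with
  | base => exact ⟨fun h => ⟨h, time_le_of_mem_greedyUpTo h⟩, fun h => h.1⟩
  | succ n hmn ih =>
    rw [ih]
    constructor
    · rintro ⟨h, hm⟩
      exact ⟨mem_union_left _ h, hm⟩
    · rintro ⟨h, hm⟩
      rcases mem_union.1 h with h | h
      · exact ⟨h, hm⟩
      · have := (mem_greedyStep.1 h).1
        omega

theorem greedyStep_congr {X G H : Finset Pt} {t : ℤ}
    (h : ∀ r : Pt, r.2 < t → (r ∈ G ↔ r ∈ H)) : greedyStep X G t = greedyStep X H t := by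
  have : (X ∪ G).filter (fun s => s.2 < t) = (X ∪ H).filter (fun s => s.2 < t) := by
    ext s
    simp only [mem_filter, mem_union]
    constructor <;> rintro ⟨hs, hst⟩ <;> have := h s hst <;> tauto
  rw [greedyStep, greedyStep, this]

/-- The output of GREEDY is self-consistent: the points at time `t + 1` are those added by one
step against the complete output. -/
theorem mem_greedyG_iff_mem_greedyStep {n : ℕ} {X : Finset Pt} {m : ℕ} (hm : m < n) {r : Pt}
    (hr : r.2 = m + 1) :
    r ∈ greedyG n X ↔ r ∈ greedyStep X (greedyG n X) (m + 1) := by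
  have hcongr : greedyStep X (greedyUpTo X m) (m + 1) =
      greedyStep X (greedyG n X) (m + 1) := by
    refine greedyStep_congr fun s hs => ?_
    rw [mem_greedyUpTo_iff_of_le hm.le, greedyG]
    have : s.2 ≤ m := by omega
    tauto
  have h1 : r ∈ greedyG n X ↔ r ∈ greedyUpTo X (m + 1) := by
    rw [mem_greedyUpTo_iff_of_le (Nat.succ_le_of_lt hm), greedyG]
    have : r.2 ≤ ((m + 1 : ℕ) : ℤ) := by push_cast; omega
    tauto
  rw [h1, ← hcongr, greedyUpTo, mem_union]
  refine ⟨fun h => h.resolve_left fun h' => ?_, Or.inr⟩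
  have := time_le_of_mem_greedyUpTo h'
  omega

theorem time_pos_of_mem_greedyUpTo {X : Finset Pt} {m : ℕ} {r : Pt}
    (hr : r ∈ greedyUpTo X m) : 1 ≤ r.2 := by
  induction m with
  | zero => simp [greedyUpTo] at hr
  | succ m ih =>
    rcases mem_union.1 hr with h | h
    · exact ih h
    · have := (mem_greedyStep.1 h).1
      omega

theorem mem_greedyG {n : ℕ} {X : Finset Pt} {r : Pt} :
    r ∈ greedyG n X ↔ (1 ≤ r.2 ∧ r.2 ≤ n) ∧ ∃ p ∈ X, p.2 = r.2 ∧
      ∃ q ∈ X ∪ greedyG n X, q.2 < r.2 ∧ q.1 = r.1 ∧ q.1 ≠ p.1 ∧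
        ∀ s ∈ X ∪ greedyG n X, s.2 < r.2 → inRect p q s → s = q := by
  by_cases hb : 1 ≤ r.2 ∧ r.2 ≤ n
  · obtain ⟨m, hm⟩ := Int.eq_ofNat_of_zero_le (sub_nonneg.2 hb.1)
    have hr : r.2 = m + 1 := by omega
    rw [mem_greedyG_iff_mem_greedyStep (by omega) hr, mem_greedyStep, ← hr]
    tauto
  · exact ⟨fun h => absurd ⟨time_pos_of_mem_greedyUpTo h, time_le_of_mem_greedyUpTo h⟩ hb,
      fun h => absurd h.1 hb⟩

/-- Every column touched by GREEDY up to some time already contains a point of `X`. -/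
theorem exists_mem_same_key_of_mem_union {n : ℕ} {X : Finset Pt} {r : Pt}
    (hr : r ∈ X ∪ greedyG n X) : ∃ x ∈ X, x.1 = r.1 ∧ x.2 ≤ r.2 := by
  induction hN : r.2.toNat using Nat.strong_induction_on generalizing r with
  | _ N ih =>
    rcases mem_union.1 hr with h | h
    · exact ⟨r, h, rfl, le_rfl⟩
    · obtain ⟨hb, p, -, -, q, hq, hqt, hqr, -⟩ := mem_greedyG.1 h
      obtain ⟨x, hx, hxk, hxt⟩ := ih q.2.toNat (by omega) hq rfl
      exact ⟨x, hx, hxk.trans hqr, by omega⟩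

theorem headI_toList_mem {s : Finset Pt} (hs : s.Nonempty) : s.toList.headI ∈ s := by
  rw [← mem_toList]
  cases h : s.toList with
  | nil => simp_all
  | cons a l => simp

theorem OP_mem {X : Finset Pt} {x r : Pt} (hx : x ∈ X) (h : x.2 = r.2) :
    OP X r ∈ X ∧ (OP X r).2 = r.2 :=
  mem_filter.1 (headI_toList_mem ⟨x, mem_filter.2 ⟨hx, h⟩⟩)

theorem TopPt_mem {B : Finset Pt} (hB : B.Nonempty) :
    TopPt B ∈ B ∧ ∀ q ∈ B, (TopPt B).2 ≤ q.2 := by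
  obtain ⟨x, hx, hmin⟩ := exists_min_image B Prod.snd hB
  exact mem_filter.1 (headI_toList_mem ⟨x, mem_filter.2 ⟨hx, hmin⟩⟩)

theorem firstAbove_spec_s13 {S : Finset Pt} {p q : Pt} (hq : q ∈ S) (hkey : q.1 = p.1)
    (htime : q.2 < p.2) :
    firstAbove S p ∈ S ∧ (firstAbove S p).2 < p.2 ∧ q.2 ≤ (firstAbove S p).2 := by
  have hmem : q.2 ∈ (S.filter (fun q => q.1 = p.1 ∧ q.2 < p.2)).image Prod.snd :=
    mem_image_of_mem _ (mem_filter.2 ⟨hq, hkey, htime⟩)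
  obtain ⟨M, hM⟩ := max_of_mem hmem
  have hfa : firstAbove S p = (p.1, M) := by
    rw [firstAbove, hM]
    rfl
  obtain ⟨x, hx, hxM⟩ := mem_image.1 (mem_of_max hM)
  obtain ⟨hxS, hxk, hxt⟩ := mem_filter.1 hx
  have hxe : x = (p.1, M) := Prod.ext hxk hxM
  rw [hfa]
  exact ⟨hxe ▸ hxS, by rw [← hxM]; exact hxt, le_max_of_eq hmem hM⟩

/-- A point visible from a non-top point `p` of a block is not older than the top `T`. -/
theorem top_time_le_of_visible {n : ℕ} {X : Finset Pt} (hX : IsPermPointSet n X) {c d : ℤ}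
    {T p q : Pt} (hT : T ∈ X) (hTc : c ≤ T.1) (hTd : T.1 ≤ d) (hpc : c ≤ p.1) (hpd : p.1 ≤ d)
    (hTp : T.2 < p.2) (hcol : ∀ x ∈ X, c ≤ x.1 → x.1 ≤ d → T.2 ≤ x.2)
    (hq : q ∈ X ∪ greedyG n X)
    (hvis : ∀ s ∈ X ∪ greedyG n X, s.2 < p.2 → inRect p q s → s = q) : T.2 ≤ q.2 := by
  by_contra! hlt
  have hcol' : ∀ s ∈ X ∪ greedyG n X, s.2 < T.2 → s.1 < c ∨ d < s.1 := by
    intro s hs hst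
    obtain ⟨x, hx, hxk, hxt⟩ := exists_mem_same_key_of_mem_union hs
    by_contra! hcon
    have := hcol x hx (by omega) (by omega)
    omega
  have hqout := hcol' q hq hlt
  have hTq : (q.1, T.2) ∈ greedyG n X := by
    have hTb := hX.time_bounds hT
    refine mem_greedyG.2 ⟨hTb, T, hT, rfl, q, hq, hlt, rfl, by omega, ?_⟩
    intro s hs hst hrect
    have hst' : s.2 < T.2 := hst
    have hsout := hcol' s hs hst'
    refine hvis s hs (by omega) ?_
    simp only [inRect] at hrect ⊢
    omega
  have heq := hvis _ (mem_union_right _ hTq) hTp (by simp only [inRect]; omega)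
  have : T.2 = q.2 := (Prod.ext_iff.1 heq).2
  omega

/-- Let `B` be a block of `X`, `p₁ ∈ G` and `CP(p₁) = (p, q)`. If `p ∈ B`
and `p ≠ Top(B)`, then `q ∈ B`. -/
theorem pair_local_to_block (n : ℕ) (X : Finset Pt) (hX : IsPermPointSet n X)
    (B : Finset Pt) (hB : IsBlock X B) (p₁ p q : Pt) (hp₁ : p₁ ∈ greedyG n X)
    (hCP : CP X (greedyG n X) p₁ = (p, q)) (hpB : p ∈ B) (hptop : p ≠ TopPt B) :
    q ∈ B := by
  obtain ⟨hne, ⟨i, j, hij⟩, c, d, hcd⟩ := hB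
  obtain ⟨hb, x, hx, hxt, v, hv, hvt, hvk, -, hvis⟩ := mem_greedyG.1 hp₁
  obtain ⟨hp, hq⟩ := Prod.ext_iff.1 hCP
  change OP X p₁ = p at hp
  change OP X (firstAbove (X ∪ greedyG n X) p₁) = q at hq
  obtain ⟨hpX, hpt⟩ := OP_mem hx hxt
  rw [hp] at hpX hpt
  obtain rfl : x = p := hX.time_inj hx hpX (hxt.trans hpt.symm)
  obtain ⟨hTB, hTmin⟩ := TopPt_mem hne
  have hBX : ∀ y ∈ B, y ∈ X ∧ i ≤ y.2 ∧ y.2 ≤ j := fun y hy => mem_filter.1 (hij ▸ hy)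
  have hkey : ∀ y ∈ B, c ≤ y.1 ∧ y.1 ≤ d := fun y hy =>
    mem_Icc.1 (hcd ▸ mem_image_of_mem Prod.fst hy)
  have hTp : (TopPt B).2 < x.2 := lt_of_le_of_ne (hTmin x hpB) fun h =>
    hptop (hX.time_inj hpX (hBX _ hTB).1 h.symm)
  have hcol : ∀ y ∈ X, c ≤ y.1 → y.1 ≤ d → (TopPt B).2 ≤ y.2 := by
    intro y hy hyc hyd
    have : y.1 ∈ B.image Prod.fst := hcd ▸ mem_Icc.2 ⟨hyc, hyd⟩
    obtain ⟨z, hz, hzy⟩ := mem_image.1 this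
    exact hX.key_inj (hBX z hz).1 hy hzy ▸ hTmin z hz
  have hTv : (TopPt B).2 ≤ v.2 :=
    top_time_le_of_visible hX (hBX _ hTB).1 (hkey _ hTB).1 (hkey _ hTB).2 (hkey _ hpB).1
      (hkey _ hpB).2 hTp hcol hv (hpt ▸ hvis)
  obtain ⟨hfS, hft, hvf⟩ := firstAbove_spec_s13 hv hvk hvt
  have hex : ∃ y ∈ X, y.2 = (firstAbove (X ∪ greedyG n X) p₁).2 := by
    rcases mem_union.1 hfS with h | h
    · exact ⟨_, h, rfl⟩
    · obtain ⟨-, y, hy, hyt, -⟩ := mem_greedyG.1 h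
      exact ⟨y, hy, hyt⟩
  obtain ⟨y, hy, hyt⟩ := hex
  obtain ⟨hqX, hqt⟩ := OP_mem hy hyt
  rw [hq] at hqX hqt
  have := (hBX _ hTB).2
  have := (hBX _ hpB).2
  rw [hij]
  exact mem_filter.2 ⟨hqX, by omega, by omega⟩
end

section
/- For every block B of X, GREEDY does not put any marked point in BOX(B) while processing Top(B); that is, every point added by GREEDY at time time(Top(B)) has key different from key(p) for every p ∈ B. -/
open Finset

attribute [local instance] Classical.propDecidable

/-- Every point added by GREEDY lies strictly below some point of `X` with the same key. -/
theorem exists_mem_above_of_mem_greedyUpTo (X : Finset Pt) (m : ℕ) :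
    ∀ s ∈ greedyUpTo X m, ∃ x ∈ X, x.1 = s.1 ∧ x.2 < s.2 := by
  induction m with
  | zero => simp [greedyUpTo]
  | succ m ih =>
    intro s hs
    rcases Finset.mem_union.mp hs with hs | hs
    · exact ih s hs
    · simp only [greedyStep, Finset.mem_biUnion, Finset.mem_image, Finset.mem_filter,
        Finset.mem_union] at hs
      obtain ⟨-, -, q, ⟨⟨hq, hqt⟩, -⟩, rfl⟩ := hs
      rcases hq with hq | hq
      · exact ⟨q, hq, rfl, hqt⟩
      · obtain ⟨x, hx, hkey, htime⟩ := ih q hq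
        exact ⟨x, hx, hkey, htime.trans hqt⟩

/-- Points of a permutation point set are determined by their keys. -/
theorem IsPermPointSet.injOn_fst {n : ℕ} {X : Finset Pt} (hX : IsPermPointSet n X) :
    Set.InjOn Prod.fst (X : Set Pt) := by
  obtain ⟨σ, rfl⟩ := hX
  intro x hx y hy hxy
  simp only [Finset.coe_image, Finset.coe_univ, Set.image_univ, Set.mem_range] at hx hy
  obtain ⟨a, rfl⟩ := hx
  obtain ⟨b, rfl⟩ := hy
  have hab : σ a = σ b := Fin.ext (by simpa using hxy)
  rw [σ.injective hab]

/-- `TopPt B` has the smallest time in `B`. -/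
theorem TopPt_snd_le {B : Finset Pt} {p : Pt} (hp : p ∈ B) : (TopPt B).2 ≤ p.2 := by
  obtain ⟨m, hm, hmin⟩ := B.exists_min_image Prod.snd ⟨p, hp⟩
  have hne : (B.filter (fun p => ∀ q ∈ B, p.2 ≤ q.2)).toList ≠ [] :=
    Finset.Nonempty.toList_ne_nil ⟨m, Finset.mem_filter.mpr ⟨hm, hmin⟩⟩
  have hmem : TopPt B ∈ (B.filter (fun p => ∀ q ∈ B, p.2 ≤ q.2)).toList := by
    obtain ⟨a, l, hal⟩ := List.exists_cons_of_ne_nil hne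
    rw [TopPt, hal]
    exact List.mem_cons_self
  exact (Finset.mem_filter.mp (Finset.mem_toList.mp hmem)).2 p hp

/-- For every block `B` of `X`, GREEDY does not put any marked point in
`BOX(B)` while processing `Top(B)`: every point added at time `time(Top(B))` has key
different from the key of every point of `B`. -/
theorem top_adds_nothing_in_box (n : ℕ) (X : Finset Pt) (hX : IsPermPointSet n X)
    (B : Finset Pt) (hB : IsBlock X B) :
    ∀ s ∈ greedyG n X, s.2 = (TopPt B).2 → ∀ p ∈ B, s.1 ≠ p.1 := by
  intro s hs htop p hp hkey
  obtain ⟨x, hx, hxs, hlt⟩ := exists_mem_above_of_mem_greedyUpTo X n s hs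
  obtain ⟨-, ⟨i, j, hBX⟩, -⟩ := hB
  have hpX : p ∈ X := (Finset.mem_filter.mp (hBX ▸ hp)).1
  have hxp : x = p := hX.injOn_fst hx hpX (hxs.trans hkey)
  have hle := TopPt_snd_le hp
  rw [hxp] at hlt
  omega
end

section
/- Let X be a permutation point set and Y a finite set of points with integer coordinates such that X ∪ Y is an arborally satisfied set. Let p, q ∈ X ∪ Y with time(q) < time(p) and key(q) < key(p), and let c be a real number that is not an integer with key(q) < c < key(p). Then there exist points a, b ∈ X ∪ Y lying in the closed axis-parallel rectangle with corners q and p such that time(a) = time(b), key(a) < c < key(b), and no point of X ∪ Y has time equal to time(a) and key strictly between key(a) and key(b). -/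
open Finset

attribute [local instance] Classical.propDecidable

theorem inRect.of_left {p q r s : Pt} (hr : inRect p q r) (hs : inRect r q s) :
    inRect p q s := by
  unfold inRect at *
  omega

theorem inRect.of_right {p q r s : Pt} (hr : inRect p q r) (hs : inRect p r s) :
    inRect p q s := by
  unfold inRect at *
  omega

/-- In an arborally satisfied set, two points on different sides of the vertical line between
keys `m` and `m + 1` span a rectangle containing a horizontally adjacent pair that crosses
the line. -/
theorem ArbSat.exists_adjacent_crossing {S : Finset Pt} (hS : ArbSat S) (m : ℤ) (p q : Pt)
    (hp : p ∈ S) (hq : q ∈ S) (hpm : p.1 ≤ m) (hmq : m < q.1) :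
    ∃ a ∈ S, ∃ b ∈ S, inRect p q a ∧ inRect p q b ∧ a.2 = b.2 ∧ a.1 ≤ m ∧ m < b.1 ∧
      ¬ ∃ r ∈ S, r.2 = a.2 ∧ a.1 < r.1 ∧ r.1 < b.1 := by
  obtain ⟨N, hN⟩ : ∃ N : ℕ, q.1 - p.1 + (max p.2 q.2 - min p.2 q.2) ≤ N :=
    ⟨_, Int.self_le_toNat _⟩
  induction N generalizing p q with
  | zero => omega
  | succ N ih =>
    by_cases hex : ∃ r ∈ S, r ≠ p ∧ r ≠ q ∧ inRect p q r
    · obtain ⟨r, hr, hrp, hrq, hrect⟩ := hex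
      have hrect' := hrect
      rw [ne_eq, Prod.ext_iff] at hrp hrq
      unfold inRect at hrect'
      rcases le_or_gt r.1 m with hrm | hmr
      · obtain ⟨a, ha, b, hb, hra, hrb, h⟩ := ih r q hr hq hrm hmq (by omega)
        exact ⟨a, ha, b, hb, hrect.of_left hra, hrect.of_left hrb, h⟩
      · obtain ⟨a, ha, b, hb, hra, hrb, h⟩ := ih p r hp hr hpm hmr (by omega)
        exact ⟨a, ha, b, hb, hrect.of_right hra, hrect.of_right hrb, h⟩
    · have htime : p.2 = q.2 :=
        ((hS p hp q hq).resolve_left (hpm.trans_lt hmq).ne).resolve_right hex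
      refine ⟨p, hp, q, hq, by simp [inRect], by simp [inRect], htime, hpm, hmq, ?_⟩
      rintro ⟨r, hr, hrt, hpr, hrq⟩
      refine hex ⟨r, hr, fun h => hpr.ne' (congrArg Prod.fst h),
        fun h => hrq.ne (congrArg Prod.fst h), ?_⟩
      simp [inRect, hrt, hpr.le, hrq.le]

/-- Let `X` be a permutation point set, `Y` a finite set of integer points
with `X ∪ Y` arborally satisfied, `p, q ∈ X ∪ Y` with `time(q) < time(p)` and
`key(q) < key(p)`, and let `c` be a non-integer real with `key(q) < c < key(p)`. Then there
are points `a, b ∈ X ∪ Y` in the closed rectangle spanned by `q` and `p` with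
`time(a) = time(b)`, `key(a) < c < key(b)`, and no point of `X ∪ Y` on the open horizontal
segment between them. -/
theorem adjacent_pair_crossing_line (n : ℕ) (X Y : Finset Pt) (hX : IsPermPointSet n X)
    (hsat : ArbSat (X ∪ Y)) (p q : Pt) (hp : p ∈ X ∪ Y) (hq : q ∈ X ∪ Y)
    (ht : q.2 < p.2) (hk : q.1 < p.1)
    (c : ℝ) (hc : ∀ m : ℤ, c ≠ (m : ℝ)) (hc₁ : (q.1 : ℝ) < c) (hc₂ : c < (p.1 : ℝ)) :
    ∃ a ∈ X ∪ Y, ∃ b ∈ X ∪ Y, inRect q p a ∧ inRect q p b ∧ a.2 = b.2 ∧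
      (a.1 : ℝ) < c ∧ c < (b.1 : ℝ) ∧
      ¬ ∃ r ∈ X ∪ Y, r.2 = a.2 ∧ a.1 < r.1 ∧ r.1 < b.1 := by
  obtain ⟨a, ha, b, hb, hra, hrb, hab, ham, hmb, hadj⟩ :=
    hsat.exists_adjacent_crossing ⌊c⌋ q p hq hp (Int.le_floor.mpr hc₁.le) (Int.floor_lt.mpr hc₂)
  exact ⟨a, ha, b, hb, hra, hrb, hab, lt_of_le_of_ne (Int.le_floor.mp ham) (hc a.1).symm,
    Int.floor_lt.mp hmb, hadj⟩
end
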